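/- Let ρ ≥ 3 be an integer and set n = 2ρ+2. Let G be a group containing elements t_0, t_1, …, t_{2ρ+1} such that: (i) t_i t_j = t_j t_i for all 1 ≤ i, j ≤ 2ρ+1 with |i−j| ≥ 2; (ii) t_i t_{i+1} t_i = t_{i+1} t_i t_{i+1} for all 1 ≤ i ≤ 2ρ; (iii) t_0 t_i = t_i t_0 for all 1 ≤ i ≤ 2ρ+1 with i ≠ 4; (iv) t_0 t_4 t_0 = t_4 t_0 t_4; (v) G is generated by t_0, t_1, …, t_{2ρ}; (vi) G is perfect, i.e. G equals its commutator subgroup. Then every group homomorphism φ : G → Sym_{4ρ+4} is trivial. -/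

import Mathlib

/-!
Write `[ij|kl]` for the statement that the places where the images of `t i` and `t j` differ are
disjoint from those where the images of `t k` and `t l` differ.

By Artin's theorem a chain of `n` braid generators, `n` odd and at least `5`, can only act on at
most `n` points with all its generators acting alike. Take the chain `0, 4, 5, …, 2ρ+1`, of length
`n = 2ρ - 1`, which commutes with `1` and `2`. It acts on `4ρ+4 = 2n + 6` points, and in the
presence of `w = t 1⁻¹ t 2`, which commutes with it, it is constant where `w` acts nontrivially: on
few points, or on few orbits of a larger abelian group commuting with the chain, Artin's theorem
applies. This is `[ij|12]` for all `i, j` in the chain.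

The relation `[ij|kl]` is transported by conjugation, symmetric in its pairs and transitive within
each pair. Moving along the diagram, one derives from `[ij|12]` the relations `[57|13]`, `[07|13]`,
`[01|57]` and `[17|04]`. Where `t 1` and `t 7` agree, the first three make the permutations
`t 1⁻¹ t i`, for `i = 0, 3, 5`, pairwise disjoint. Each of them is braided with `t 1⁻¹ t 4` and so
must move half of its support, which leaves room for two of them only; hence `t 1⁻¹ t 4 = 1` there,
and `t 0 = t 4`. Where `t 1` and `t 7` differ, `[17|04]` gives the same conclusion. A braid relation
between commuting elements being an equality, `t 0 = t 4` makes all the `t i` act alike, and the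
image of the group is cyclic.
-/

open Equiv Equiv.Perm

universe u

section BraidRel

variable {G H : Type*} [Group G] [Group H] {x y z : G}

/-- The braid relation `xyx = yxy`. -/
def BraidRel (x y : G) : Prop := x * y * x = y * x * y

namespace BraidRel

theorem symm (h : BraidRel x y) : BraidRel y x := Eq.symm h

theorem map (h : BraidRel x y) (f : G →* H) : BraidRel (f x) (f y) := by
  simpa only [BraidRel, map_mul] using congrArg f h

theorem of_map {f : G →* H} (hf : Function.Injective f) (h : BraidRel (f x) (f y)) :
    BraidRel x y := by
  apply hf
  simpa only [BraidRel, map_mul] using h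

theorem eq_of_commute (h : BraidRel x y) (hxy : Commute x y) : x = y := by
  have : x * y * x = x * y * y := h.trans (by rw [hxy.eq])
  exact mul_left_cancel this

theorem eq_one (h : BraidRel x 1) : x = 1 :=
  h.eq_of_commute (Commute.one_right x)

theorem semiconjBy (h : BraidRel x y) : SemiconjBy (x * y) x y := by
  rw [SemiconjBy, h, mul_assoc]

theorem mul_left_of_commute (h : BraidRel x y) (hx : Commute z x) (hy : Commute z y) :
    BraidRel (z * x) (z * y) := by
  rw [BraidRel, hx.symm.mul_mul_mul_comm, (hx.symm.mul_left hy.symm).mul_mul_mul_comm, h,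
    hy.symm.mul_mul_mul_comm, (hy.symm.mul_left hx.symm).mul_mul_mul_comm]

end BraidRel

end BraidRel

section ArtinRelations

variable {V W G H : Type*} [Group G] [Group H] {Γ : SimpleGraph V} {s : V → G}

/-- The relations of the Artin group whose Coxeter graph `Γ` has only edges labelled `3`: adjacent
vertices are braided and nonadjacent ones commute. Chains of `n` Artin generators are the case
`Γ = SimpleGraph.pathGraph n`. -/
structure ArtinRelations (Γ : SimpleGraph V) (s : V → G) : Prop where
  braid : ∀ {i j}, Γ.Adj i j → BraidRel (s i) (s j)
  commute : ∀ {i j}, ¬ Γ.Adj i j → Commute (s i) (s j)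

namespace ArtinRelations

theorem map (hs : ArtinRelations Γ s) (f : G →* H) : ArtinRelations Γ (fun i => f (s i)) where
  braid h := (hs.braid h).map f
  commute h := (hs.commute h).map f

theorem of_map {f : G →* H} (hf : Function.Injective f)
    (hs : ArtinRelations Γ (fun i => f (s i))) : ArtinRelations Γ s where
  braid h := .of_map hf (hs.braid h)
  commute h := .of_map hf (hs.commute h)

theorem comap (hs : ArtinRelations Γ s) {Γ' : SimpleGraph W} (f : W → V)
    (hf : ∀ i j, Γ.Adj (f i) (f j) ↔ Γ'.Adj i j) : ArtinRelations Γ' (fun i => s (f i)) where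
  braid h := hs.braid ((hf _ _).mpr h)
  commute h := hs.commute (mt (hf _ _).mp h)

theorem eq_of_walk (hs : ArtinRelations Γ s)
    (hΓ : ∀ {i j k}, Γ.Adj i j → Γ.Adj j k → ¬ Γ.Adj i k) {i j k : V} (hij : Γ.Adj i j)
    (h : s i = s j) (p : Γ.Walk i k) : s k = s i := by
  induction p generalizing j with
  | nil => rfl
  | @cons i l k hil _ ih =>
    have hli : s l = s i := by
      by_cases hjl : Γ.Adj j l
      · exact absurd hil (hΓ hij hjl)
      · exact ((hs.braid hil).eq_of_commute (h ▸ hs.commute hjl)).symm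
    exact (ih hil.symm hli).trans hli

theorem eq_of_adj_eq (hs : ArtinRelations Γ s) (hΓ : Γ.Preconnected)
    (hΓ' : ∀ {i j k}, Γ.Adj i j → Γ.Adj j k → ¬ Γ.Adj i k) {i j : V} (hij : Γ.Adj i j)
    (h : s i = s j) (k l : V) : s k = s l :=
  have (m : V) : s m = s i := (hΓ i m).elim (hs.eq_of_walk hΓ' hij h)
  (this k).trans (this l).symm

theorem eq_of_map_eq (hs : ArtinRelations Γ s) (f : G →* H) [IsMulCommutative f.ker] {i j k : V}
    (hij : ¬ Γ.Adj i j) (hik : ¬ Γ.Adj i k) (hjk : Γ.Adj j k) (hj : f (s i) = f (s j))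
    (hk : f (s i) = f (s k)) : s j = s k := by
  obtain ⟨a, ha⟩ : ∃ a, s i * a = s j := ⟨(s i)⁻¹ * s j, by group⟩
  obtain ⟨b, hb⟩ : ∃ b, s i * b = s k := ⟨(s i)⁻¹ * s k, by group⟩
  have hak : a ∈ f.ker := by
    rw [← ha, map_mul] at hj
    simpa [MonoidHom.mem_ker] using hj
  have hbk : b ∈ f.ker := by
    rw [← hb, map_mul] at hk
    simpa [MonoidHom.mem_ker] using hk
  have hab : Commute a b := setLike_mul_comm hak hbk
  have hia : Commute (s i) a := by
    rw [← inv_mul_eq_iff_eq_mul.mpr ha.symm]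
    exact (Commute.refl (s i)).inv_right.mul_right (hs.commute hij)
  have hib : Commute (s i) b := by
    rw [← inv_mul_eq_iff_eq_mul.mpr hb.symm]
    exact (Commute.refl (s i)).inv_right.mul_right (hs.commute hik)
  refine (hs.braid hjk).eq_of_commute ?_
  rw [← ha, ← hb]
  exact ((Commute.refl _).mul_right hib).mul_left (hia.symm.mul_right hab)

end ArtinRelations

end ArtinRelations

section PathGraph

open SimpleGraph

variable {G H : Type*} [Group G] [Group H] {n : ℕ} {b : Fin n → G}

namespace ArtinRelations

theorem braid_succ (hb : ArtinRelations (pathGraph n) b) {i j : Fin n}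
    (h : (i : ℕ) + 1 = j) : BraidRel (b i) (b j) :=
  hb.braid (pathGraph_adj.mpr (.inl h))

theorem commute_of_lt (hb : ArtinRelations (pathGraph n) b) {i j : Fin n}
    (h : (i : ℕ) + 1 < j) : Commute (b i) (b j) :=
  hb.commute (by rw [pathGraph_adj]; omega)

theorem eq_of_pathGraph (hb : ArtinRelations (pathGraph n) b) {i j : Fin n}
    (h : (i : ℕ) + 1 = j) (hij : b i = b j) (k l : Fin n) : b k = b l :=
  hb.eq_of_adj_eq (pathGraph_preconnected n)
    (fun h₁ h₂ => by rw [pathGraph_adj] at *; omega) (pathGraph_adj.mpr (.inl h)) hij k l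

theorem eq_of_map_pathGraph_eq (hb : ArtinRelations (pathGraph n) b) (hn : 4 ≤ n) (f : G →* H)
    [IsMulCommutative f.ker] (h : ∀ i j, f (b i) = f (b j)) (i j : Fin n) : b i = b j :=
  hb.eq_of_pathGraph (i := ⟨2, by omega⟩) (j := ⟨3, by omega⟩) rfl
    (hb.eq_of_map_eq f (i := ⟨0, by omega⟩) (by simp [pathGraph_adj]) (by simp [pathGraph_adj])
      (by simp [pathGraph_adj]) (h _ _) (h _ _)) i j

end ArtinRelations

end PathGraph

section Orbits

open MulAction

variable (A : Type*) (Y : Type u) [Group A] [MulAction A Y]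

/-- The group of permutations of `Y` commuting with the action of `A`. -/
abbrev equivariantPerm : Subgroup (Perm Y) :=
  Subgroup.centralizer (Set.range (toPermHom A Y))

variable {A Y}

theorem mem_equivariantPerm {c : Perm Y} :
    c ∈ equivariantPerm A Y ↔ ∀ (a : A) y, c (a • y) = a • c y := by
  simp only [Subgroup.mem_centralizer_iff, Set.forall_mem_range, Equiv.ext_iff, Perm.mul_apply,
    toPermHom_apply, toPerm_apply, eq_comm]

theorem equivariantPerm_apply_smul (c : equivariantPerm A Y) (a : A) (y : Y) :
    c.1 (a • y) = a • c.1 y :=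
  mem_equivariantPerm.mp c.2 a y

theorem orbit_equivariantPerm_apply (c : equivariantPerm A Y) (y : Y) :
    orbit A (c.1 y) = c.1 '' orbit A y := by
  rw [orbit, orbit, ← Set.range_comp]
  exact congrArg _ (funext fun a => (equivariantPerm_apply_smul c a y).symm)

theorem mem_equivariantPerm_subgroup {A : Subgroup (Perm Y)} {c : Perm Y} :
    c ∈ equivariantPerm A Y ↔ A ≤ Subgroup.centralizer {c} := by
  simp only [mem_equivariantPerm, SetLike.le_def, Subgroup.mem_centralizer_singleton_iff,
    Equiv.ext_iff, Subtype.forall]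
  exact forall₃_congr fun _ _ _ => eq_comm

theorem mem_equivariantPerm_zpowers {w c : Perm Y} (h : Commute w c) :
    c ∈ equivariantPerm (Subgroup.zpowers w) Y := by
  rw [mem_equivariantPerm_subgroup, Subgroup.zpowers_le]
  exact Subgroup.mem_centralizer_singleton_iff.mpr h.eq

variable (A Y)

/-- The action on the set of `A`-orbits of the permutations commuting with `A`. -/
def orbitPermHom : equivariantPerm A Y →* Perm (orbitRel.Quotient A Y) where
  toFun c := Quotient.congr c.1 fun x y => by
    rw [orbitRel_apply, orbitRel_apply, orbit_equivariantPerm_apply, c.1.injective.mem_set_image]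
  map_one' := by ext ⟨y⟩; rfl
  map_mul' c d := by ext ⟨y⟩; rfl

variable {A Y}

theorem mem_ker_orbitPermHom {c : equivariantPerm A Y} :
    c ∈ (orbitPermHom A Y).ker ↔ ∀ y, ∃ a : A, a • y = c.1 y := by
  rw [MonoidHom.mem_ker, Equiv.ext_iff, Quotient.forall]
  exact forall_congr' fun y => Quotient.eq (r := orbitRel A Y)

instance ker_orbitPermHom_isMulCommutative [IsMulCommutative A] :
    IsMulCommutative (orbitPermHom A Y).ker where
  is_comm.comm := by
    rintro ⟨c, hc⟩ ⟨d, hd⟩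
    ext y
    obtain ⟨a, ha⟩ := mem_ker_orbitPermHom.mp hc y
    obtain ⟨b, hb⟩ := mem_ker_orbitPermHom.mp hd y
    change c.1 (d.1 y) = d.1 (c.1 y)
    rw [← ha, ← hb, equivariantPerm_apply_smul, equivariantPerm_apply_smul, ← ha, ← hb,
      smul_smul, smul_smul, mul_comm']

theorem mul_self_eq_one_of_mem_ker_orbitPermHom (hA : ∀ (a : A) (y : Y), a • a • y = y)
    {c : equivariantPerm A Y} (hc : c ∈ (orbitPermHom A Y).ker) : c * c = 1 := by
  ext y
  obtain ⟨a, ha⟩ := mem_ker_orbitPermHom.mp hc y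
  change c.1 (c.1 y) = y
  rw [← ha, equivariantPerm_apply_smul, ← ha, hA]

theorem mul_card_orbitRel_quotient_le [Finite Y] {q : ℕ} (hq : ∀ y : Y, q ≤ (orbit A y).ncard) :
    q * Nat.card (orbitRel.Quotient A Y) ≤ Nat.card Y := by
  have := Fintype.ofFinite (orbitRel.Quotient A Y)
  rw [Nat.card_congr (selfEquivSigmaOrbits A Y), Nat.card_sigma, mul_comm,
    Nat.card_eq_fintype_card, ← smul_eq_mul, ← Finset.card_univ]
  exact Finset.card_nsmul_le_sum _ _ _ fun ω _ => hq ω.out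

theorem two_le_ncard_orbit [Finite Y] {a : A} {y : Y} (h : a • y ≠ y) : 2 ≤ (orbit A y).ncard :=
  (Set.one_lt_ncard_iff (Set.toFinite _)).mpr ⟨y, a • y, mem_orbit_self y, mem_orbit y a, h.symm⟩

theorem three_le_ncard_orbit [Finite Y] {a : A} {y : Y} (h : a • a • y ≠ y) :
    3 ≤ (orbit A y).ncard := by
  have h' : a • y ≠ y := fun e => h (by rw [e, e])
  refine (Set.two_lt_ncard_iff (Set.toFinite _)).mpr
    ⟨y, a • y, a • a • y, mem_orbit_self y, mem_orbit y a, ?_, h'.symm, h.symm, ?_⟩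
  · exact smul_smul a a y ▸ mem_orbit y (a * a)
  · exact (smul_left_cancel_iff a).not.mpr h'.symm

end Orbits

section PathRigid

open MulAction SimpleGraph

/-- Artin's rigidity property of `n`-generator chains: every action of the braid group on `n + 1`
strands on at most `n` points factors through the abelianization. -/
def PathRigid (n : ℕ) : Prop :=
  ∀ (Y : Type u) [Finite Y] (b : Fin n → Perm Y), ArtinRelations (pathGraph n) b →
    Nat.card Y ≤ n → ∀ i j, b i = b j

theorem PathRigid.eq_of_le_ncard_orbit {Y : Type u} [Finite Y] {n q : ℕ} {b : Fin n → Perm Y}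
    (hn : PathRigid.{u} n) (h4 : 4 ≤ n) (hb : ArtinRelations (pathGraph n) b)
    {A : Type*} [Group A] [IsMulCommutative A] [MulAction A Y] (hA : ∀ i, b i ∈ equivariantPerm A Y)
    (hq : ∀ y : Y, q ≤ (orbit A y).ncard) (hY : Nat.card Y < q * (n + 1)) (i j : Fin n) :
    b i = b j := by
  let c (i : Fin n) : equivariantPerm A Y := ⟨b i, hA i⟩
  have hc : ArtinRelations (pathGraph n) c := .of_map (Subgroup.subtype_injective _) hb
  have hcard : Nat.card (orbitRel.Quotient A Y) ≤ n :=
    Nat.lt_succ_iff.mp (Nat.lt_of_mul_lt_mul_left ((mul_card_orbitRel_quotient_le hq).trans_lt hY))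
  exact congrArg Subtype.val
    (hc.eq_of_map_pathGraph_eq h4 (orbitPermHom A Y) (hn _ _ (hc.map _) hcard) i j)

end PathRigid

section BasePair

open MulAction

theorem eq_or_eq_or_eq_of_card_le_two {Q : Type*} [Finite Q] (hQ : Nat.card Q ≤ 2) (a b c : Q) :
    a = b ∨ a = c ∨ b = c := by
  have := Fintype.ofFinite Q
  classical
  by_contra! h
  have h3 := Finset.card_le_univ {a, b, c}
  rw [Finset.card_eq_three.mpr ⟨a, b, c, h.1, h.2.1, h.2.2, rfl⟩] at h3
  rw [Nat.card_eq_fintype_card] at hQ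
  omega

variable {Y : Type*}

theorem mul_self_eq_one_of_card_le_two [Finite Y] (hY : Nat.card Y ≤ 2) (f : Perm Y) :
    f * f = 1 := by
  ext y
  have := eq_or_eq_or_eq_of_card_le_two hY y (f y) (f (f y))
  simp only [EmbeddingLike.apply_eq_iff_eq, eq_comm (a := y)] at this
  rw [mul_apply, one_apply]
  grind

theorem apply_ne_self_of_card_le_two [Finite Y] (hY : Nat.card Y ≤ 2) {f : Perm Y} (hf : f ≠ 1)
    (y : Y) : f y ≠ y := by
  obtain ⟨z, hz⟩ : ∃ z, f z ≠ z := by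
    contrapose! hf
    exact Equiv.ext hf
  have := eq_or_eq_or_eq_of_card_le_two hY y z (f z)
  have := f.injective (a₁ := y) (a₂ := z)
  grind

theorem smul_smul_eq_of_orbitPermHom_ne [Finite Y] (hY : Nat.card Y ≤ 5) {A : Type*} [Group A]
    [MulAction A Y] {c : equivariantPerm A Y} {y : Y}
    (h : orbitPermHom A Y c (Quotient.mk _ y) ≠ Quotient.mk _ y) (a : A) : a • a • y = y := by
  by_contra hy
  have hcy : a • a • c.1 y ≠ c.1 y := by
    rwa [← equivariantPerm_apply_smul, ← equivariantPerm_apply_smul, c.1.injective.ne_iff]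
  have hdisj : Disjoint (orbit A (c.1 y)) (orbit A y) :=
    (orbit.eq_or_disjoint _ _).resolve_left fun e => h (Quotient.sound (orbit_eq_iff.mp e))
  have := Set.ncard_union_eq hdisj
  have := Set.ncard_le_card (orbit A (c.1 y) ∪ orbit A y)
  have := three_le_ncard_orbit hy
  have := three_le_ncard_orbit hcy
  omega

theorem BraidRel.eq_of_mul_self_eq_one {G : Type*} [Group G] {x y : G} (h : BraidRel x y)
    (hx : x * x * (x * x) = 1) (hxy : x * y * (x * y) = 1) : x = y := by
  have : x * x * (x * x) = x * x * (y * x) := by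
    calc x * x * (x * x) = x * (y * x * y) := by rw [hx, ← hxy]; group
      _ = x * x * (y * x) := by rw [← h]; group
  exact mul_right_cancel (mul_left_cancel this)

/-- The orbits of `w` are permuted by `x` and `y` alike, there being at most two; if they are not
all fixed then they have exactly two points each, and so the kernel of the action on orbits has
exponent two. -/
theorem BraidRel.eq_of_card_le_five [Finite Y] (hY : Nat.card Y ≤ 5) {w x y : Perm Y}
    (h : BraidRel x y) (hwx : Commute w x) (hwy : Commute w y) (hw : ∀ z, w z ≠ z) : x = y := by
  let A := Subgroup.zpowers w
  let c : equivariantPerm A Y := ⟨x, mem_equivariantPerm_zpowers hwx⟩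
  let d : equivariantPerm A Y := ⟨y, mem_equivariantPerm_zpowers hwy⟩
  have hcd : BraidRel c d := .of_map (Subgroup.subtype_injective _) h
  let π := orbitPermHom A Y
  have hcard : Nat.card (orbitRel.Quotient A Y) ≤ 2 := by
    have := mul_card_orbitRel_quotient_le (A := A) fun z =>
      two_le_ncard_orbit (a := ⟨w, Subgroup.mem_zpowers w⟩) (hw z)
    omega
  have hsq (f) : π f * π f = 1 := mul_self_eq_one_of_card_le_two hcard _
  have hπ : π c = π d :=
    (hcd.map π).eq_of_mul_self_eq_one (by rw [hsq, one_mul]) (by rw [← map_mul, hsq])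
  suffices c = d from congrArg Subtype.val this
  by_cases hc : π c = 1
  · exact hcd.eq_of_commute (setLike_mul_comm (S := Subgroup _) (s := π.ker) hc (hπ ▸ hc : π d = 1))
  · have hA (a : A) (z : Y) : a • a • z = z :=
      smul_smul_eq_of_orbitPermHom_ne hY (apply_ne_self_of_card_le_two hcard hc _) a
    refine hcd.eq_of_mul_self_eq_one (mul_self_eq_one_of_mem_ker_orbitPermHom hA ?_)
      (mul_self_eq_one_of_mem_ker_orbitPermHom hA ?_) <;>
    rw [MonoidHom.mem_ker, map_mul]
    · exact hsq c
    · exact hπ ▸ hsq c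

end BasePair

section Restriction

variable {V Y : Type*} {Γ : SimpleGraph V} {s : V → Perm Y} {p : Y → Prop}

theorem apply_apply_of_semiconjBy {g a b : Perm Y} (h : SemiconjBy g a b) (y : Y) :
    g (a y) = b (g y) :=
  Perm.congr_fun h.eq y

theorem apply_apply_eq_iff_of_commute {w c : Perm Y} (h : Commute w c) (y : Y) :
    w (c y) = c y ↔ w y = y := by
  rw [apply_apply_of_semiconjBy h, c.injective.eq_iff]

theorem apply_iff_of_agree {f g : Perm Y} (hg : ∀ y, p (g y) ↔ p y) (h : ∀ y, p y → f y = g y)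
    (y : Y) : p (f y) ↔ p y := by
  refine ⟨fun hy => ?_, fun hy => h y hy ▸ (hg y).mpr hy⟩
  obtain ⟨z, hz⟩ := g.surjective (f y)
  have hpz : p z := (hg z).mp (hz ▸ hy)
  rwa [← f.injective ((h z hpz).trans hz)]

theorem BraidRel.subtypePerm {a b : Perm Y} (h : BraidRel a b) (ha : ∀ y, p (a y) ↔ p y)
    (hb : ∀ y, p (b y) ↔ p y) : BraidRel (a.subtypePerm ha) (b.subtypePerm hb) := by
  ext y
  exact Perm.congr_fun h y

theorem commute_subtypePerm {a b : Perm Y} (h : Commute a b) (ha : ∀ y, p (a y) ↔ p y)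
    (hb : ∀ y, p (b y) ↔ p y) : Commute (a.subtypePerm ha) (b.subtypePerm hb) := by
  ext y
  exact Perm.congr_fun h y

theorem ArtinRelations.subtypePerm (hs : ArtinRelations Γ s) (hp : ∀ i y, p (s i y) ↔ p y) :
    ArtinRelations Γ (fun i => (s i).subtypePerm (hp i)) where
  braid h := (hs.braid h).subtypePerm _ _
  commute h := commute_subtypePerm (hs.commute h) _ _

theorem disjoint_of_semiconjBy {g a b a' b' : Perm Y} (h : Perm.Disjoint a b)
    (ha : SemiconjBy g a a') (hb : SemiconjBy g b b') : Perm.Disjoint a' b' := by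
  rw [← mul_inv_eq_iff_eq_mul.mpr ha.eq, ← mul_inv_eq_iff_eq_mul.mpr hb.eq]
  exact h.conj g

theorem two_mul_card_le_of_pairwise_disjoint [Finite Y] {ι : Type*} [Fintype ι] {f : ι → Perm Y}
    (hf : ∀ i, f i ≠ 1) (hd : Pairwise fun i j => Perm.Disjoint (f i) (f j)) :
    2 * Fintype.card ι ≤ Nat.card Y := by
  classical
  have := Fintype.ofFinite Y
  calc 2 * Fintype.card ι = ∑ _i : ι, 2 := by simp [mul_comm]
    _ ≤ ∑ i, (f i).support.card :=
      Finset.sum_le_sum fun i _ => two_le_card_support_of_ne_one (hf i)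
    _ = (Finset.univ.biUnion fun i => (f i).support).card :=
      (Finset.card_biUnion fun i _ j _ hij => (hd hij).disjoint_support).symm
    _ ≤ Nat.card Y := Nat.card_eq_fintype_card (α := Y) ▸ Finset.card_le_univ _

end Restriction

section Artin

open SimpleGraph

namespace ArtinRelations

variable {Y : Type*} {k : ℕ} {b : Fin (k + 1) → Perm Y}

theorem disjoint_of_disjoint_zero (hb : ArtinRelations (pathGraph (k + 1)) b)
    (h : ∀ j : Fin (k + 1), 2 ≤ (j : ℕ) → Perm.Disjoint (b 0) (b j)) (i j : Fin (k + 1))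
    (hij : (i : ℕ) + 2 ≤ j) : Perm.Disjoint (b i) (b j) := by
  induction i using Fin.induction with
  | zero => exact h j (by simpa using hij)
  | succ i ih =>
    simp only [Fin.val_succ] at hij
    refine disjoint_of_semiconjBy (ih (by simp only [Fin.val_castSucc]; omega))
      (hb.braid_succ (by simp)).semiconjBy ?_
    exact (hb.commute_of_lt (by simp only [Fin.val_castSucc]; omega)).mul_left
      (hb.commute_of_lt (by simp only [Fin.val_succ]; omega))

theorem eq_one_of_disjoint_zero [Finite Y] (hb : ArtinRelations (pathGraph (k + 1)) b)
    (hk : Even k) (hY : Nat.card Y ≤ k + 1)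
    (h : ∀ j : Fin (k + 1), 2 ≤ (j : ℕ) → Perm.Disjoint (b 0) (b j)) (i : Fin (k + 1)) :
    b i = 1 := by
  have adjacent (i : Fin k) : BraidRel (b i.castSucc) (b i.succ) := hb.braid_succ (by simp)
  by_cases h0 : b 0 = 1
  · induction i using Fin.induction with
    | zero => exact h0
    | succ i ih => exact (ih ▸ adjacent i).symm.eq_one
  have hne (i : Fin (k + 1)) : b i ≠ 1 := by
    induction i using Fin.induction with
    | zero => exact h0
    | succ i ih => exact fun e => ih (e ▸ adjacent i).eq_one
  obtain ⟨r, rfl⟩ := hk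
  have hdisj : Pairwise fun i j : Fin (r + 1) =>
      Perm.Disjoint (b ⟨i + i, by omega⟩) (b ⟨j + j, by omega⟩) := by
    intro i j hij
    rcases lt_or_gt_of_ne (Fin.val_ne_of_ne hij) with hlt | hlt
    · exact hb.disjoint_of_disjoint_zero h _ _ (by simp only; omega)
    · exact (hb.disjoint_of_disjoint_zero h _ _ (by simp only; omega)).symm
  have := two_mul_card_le_of_pairwise_disjoint (fun i => hne _) hdisj
  rw [Fintype.card_fin] at this
  omega

end ArtinRelations

/-- The form in which rigidity passes from chains of `m` to chains of `m + 2` generators: a chain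
of permutations of at most `N` points is constant if it commutes with a permutation without fixed
points. -/
def CommutingPathRigid (m N : ℕ) : Prop :=
  ∀ (Y : Type u) [Finite Y] (c : Fin m → Perm Y) (w : Perm Y), ArtinRelations (pathGraph m) c →
    (∀ i, Commute w (c i)) → (∀ y, w y ≠ y) → Nat.card Y ≤ N → ∀ i j, c i = c j

theorem commutingPathRigid_three_five : CommutingPathRigid.{u} 3 5 := by
  intro Y _ c w hc hwc hw hY
  have succ_eq (i j : Fin 3) (hij : (i : ℕ) + 1 = j) : c i = c j :=
    (hc.braid_succ hij).eq_of_card_le_five hY (hwc i) (hwc j) hw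
  exact hc.eq_of_pathGraph (i := 0) (j := 1) rfl (succ_eq 0 1 rfl)

theorem PathRigid.commutingPathRigid {m N : ℕ} (hm : PathRigid.{u} m) (h4 : 4 ≤ m)
    (hN : N < 2 * (m + 1)) : CommutingPathRigid.{u} m N := by
  intro Y _ c w hc hwc hw hY
  exact hm.eq_of_le_ncard_orbit h4 hc (A := Subgroup.zpowers w)
    (fun i => mem_equivariantPerm_zpowers (hwc i))
    (fun y => two_le_ncard_orbit (a := ⟨w, Subgroup.mem_zpowers w⟩) (hw y)) (hY.trans_lt hN)

namespace CommutingPathRigid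

variable {Y : Type u} [Finite Y] {m N : ℕ}

theorem apply_eq_of_apply_ne (hm : CommutingPathRigid.{u} m N) {c : Fin m → Perm Y} {w : Perm Y}
    (hc : ArtinRelations (pathGraph m) c) (hwc : ∀ i, Commute w (c i))
    (hY : {y | w y ≠ y}.ncard ≤ N) {y : Y} (hy : w y ≠ y) (i j : Fin m) : c i y = c j y := by
  have hp (i) (y : Y) : w (c i y) ≠ c i y ↔ w y ≠ y :=
    (apply_apply_eq_iff_of_commute (hwc i) y).not
  have := hm {y // w y ≠ y} (fun i => (c i).subtypePerm (hp i))
    (w.subtypePerm fun y => w.injective.ne_iff) (hc.subtypePerm hp)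
    (fun i => commute_subtypePerm (hwc i) _ _) (fun y e => y.2 (congrArg Subtype.val e)) hY i j
  exact congrArg Subtype.val (Perm.congr_fun this ⟨y, hy⟩)

theorem apply_eq_of_apply_zero_ne (hm : CommutingPathRigid.{u} m (m + 2))
    {b : Fin (m + 2) → Perm Y} (hb : ArtinRelations (pathGraph (m + 2)) b)
    (hY : Nat.card Y ≤ m + 2) {y : Y} (hy : b 0 y ≠ y) {i j : Fin (m + 2)} (hi : 2 ≤ (i : ℕ))
    (hj : 2 ≤ (j : ℕ)) : b i y = b j y := by
  have hc : ArtinRelations (pathGraph m) fun i => b (i.addNat 2) :=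
    hb.comap (fun i : Fin m => i.addNat 2) fun i j => by
      simp only [pathGraph_adj, Fin.val_addNat]
      omega
  have := hm.apply_eq_of_apply_ne hc (fun i => hb.commute_of_lt (by simp))
    ((Set.ncard_le_card _).trans hY) hy ⟨i - 2, by omega⟩ ⟨j - 2, by omega⟩
  simpa [hi, hj] using this

theorem apply_eq_of_apply_last_ne (hm : CommutingPathRigid.{u} m (m + 2))
    {b : Fin (m + 2) → Perm Y} (hb : ArtinRelations (pathGraph (m + 2)) b)
    (hY : Nat.card Y ≤ m + 2) {y : Y} (hy : b (Fin.last _) y ≠ y) {i j : Fin (m + 2)}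
    (hi : (i : ℕ) < m) (hj : (j : ℕ) < m) : b i y = b j y := by
  have hc : ArtinRelations (pathGraph (m + 2)) fun i => b i.rev :=
    hb.comap Fin.rev fun i j => by
      simp only [pathGraph_adj, Fin.val_rev]
      omega
  have := hm.apply_eq_of_apply_zero_ne hc hY (y := y) (i := i.rev) (j := j.rev) (by simpa using hy)
    (by simp only [Fin.val_rev]; omega) (by simp only [Fin.val_rev]; omega)
  simpa using this

/-- On the common support of the first and the last generator the whole chain is constant; off it
the first generator is disjoint from all but its neighbour. -/
theorem pathRigid_add_two (hm : CommutingPathRigid.{u} m (m + 2)) (h3 : 3 ≤ m) (hodd : Odd m) :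
    PathRigid.{u} (m + 2) := by
  intro Y _ b hb hY
  let last := Fin.last (m + 1)
  let two : Fin (m + 2) := ⟨2, by omega⟩
  let p (y : Y) : Prop := b 0 y ≠ y ∧ b last y ≠ y
  have agree (i) (y : Y) (hy : p y) : b i y = b two y := by
    by_cases hi : 2 ≤ (i : ℕ)
    · exact hm.apply_eq_of_apply_zero_ne hb hY hy.1 hi le_rfl
    · exact hm.apply_eq_of_apply_last_ne hb hY hy.2 (by omega) (show 2 < m by omega)
  have commute_zero : Commute (b 0) (b two) := hb.commute_of_lt (by simp [two])
  have commute_last : Commute (b last) (b two) :=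
    (hb.commute_of_lt (by simp only [two, last, Fin.val_last]; omega)).symm
  have invariant_two (y : Y) : p (b two y) ↔ p y :=
    and_congr (apply_apply_eq_iff_of_commute commute_zero y).not
      (apply_apply_eq_iff_of_commute commute_last y).not
  have invariant (i) (y : Y) : p (b i y) ↔ p y := apply_iff_of_agree invariant_two (agree i) y
  have hb' := hb.subtypePerm (p := fun y => ¬ p y) fun i y => (invariant i y).not
  have fixed (i : Fin (m + 2)) (y : Y) (hy : ¬ p y) : b i y = y := by
    have := hb'.eq_one_of_disjoint_zero hodd.add_one ((Finite.card_subtype_le _).trans hY) ?_ i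
    · exact congrArg Subtype.val (Perm.congr_fun this ⟨y, hy⟩)
    intro j hj ⟨y, hy⟩
    refine Or.imp Subtype.ext Subtype.ext ?_
    change b 0 y = y ∨ b j y = y
    by_contra! h
    exact hy ⟨h.1, hm.apply_eq_of_apply_zero_ne hb hY h.1 hj
      (show 2 ≤ (last : ℕ) by simp only [last, Fin.val_last]; omega) ▸ h.2⟩
  intro i j
  ext y
  by_cases hy : p y
  · rw [agree i y hy, agree j y hy]
  · rw [fixed i y hy, fixed j y hy]

end CommutingPathRigid

theorem pathRigid_odd (k : ℕ) : PathRigid.{u} (2 * k + 5) := by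
  induction k with
  | zero => exact commutingPathRigid_three_five.pathRigid_add_two le_rfl (by decide)
  | succ k ih =>
    exact (ih.commutingPathRigid (by omega) (by omega)).pathRigid_add_two (by omega)
      ⟨k + 2, by ring⟩

end Artin

section Star

open MulAction SimpleGraph

theorem BraidRel.conj_mul_eq {G : Type*} [Group G] {a w : G} (h : BraidRel a (a * w))
    (hw : w * w = 1) : a * w * a⁻¹ * w = a⁻¹ * w * a := by
  have h' : a * w * a = w * a * a * w :=
    mul_left_cancel (a := a) (by simpa only [BraidRel, mul_assoc] using h)
  calc a * w * a⁻¹ * w = a⁻¹ * (w * w * a * a * w) * a⁻¹ * w := by rw [hw]; group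
    _ = a⁻¹ * (w * (w * a * a * w)) * a⁻¹ * w := by group
    _ = a⁻¹ * w * a * (w * w) := by rw [← h']; group
    _ = a⁻¹ * w * a := by rw [hw, mul_one]

theorem commute_of_mul_self_eq_one {G : Type*} [Group G] {u w : G} (hu : u * u = 1)
    (hw : w * w = 1) (huw : u * w * (u * w) = 1) : Commute u w := by
  rw [← inv_eq_iff_mul_eq_one] at hu hw huw
  rw [Commute, SemiconjBy, ← huw, mul_inv_rev, hu, hw]

theorem four_le_ncard_orbit {A Y : Type*} [Group A] [IsMulCommutative A] [MulAction A Y] [Finite Y]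
    {a b : A} {y : Y} (ha : a • y ≠ y) (hb : b • y ≠ y) (hab : a • y ≠ b • y)
    (hab' : (a * b) • y ≠ y) : 4 ≤ (orbit A y).ncard := by
  rw [Nat.succ_le_iff, Set.ncard_eq_toFinset_card _ (Set.toFinite _), Finset.three_lt_card_iff]
  refine ⟨y, a • y, b • y, (a * b) • y, ?_, ?_, ?_, ?_, ha.symm, hb.symm, hab'.symm, hab, ?_, ?_⟩
  · simp
  · simp
  · simp
  · simp
  · rwa [mul_smul, ne_eq, smul_left_cancel_iff, eq_comm]
  · rwa [mul_comm', mul_smul, ne_eq, smul_left_cancel_iff, eq_comm]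

namespace PathRigid

variable {X : Type u} [Finite X] {n : ℕ} {c : Fin n → Perm X}

theorem apply_eq_of_le_ncard_orbit {q : ℕ} (hn : PathRigid.{u} n) (h4 : 4 ≤ n)
    (hc : ArtinRelations (pathGraph n) c) {A : Type*} [Group A] [IsMulCommutative A] [MulAction A X]
    (hA : ∀ i, c i ∈ equivariantPerm A X)
    (hX : {x : X | q ≤ (orbit A x).ncard}.ncard < q * (n + 1)) {x : X}
    (hx : q ≤ (orbit A x).ncard) (i j : Fin n) : c i x = c j x := by
  let S : SubMulAction A X :=
    { carrier := {x : X | q ≤ (orbit A x).ncard}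
      smul_mem' := fun a x hx => (congrArg (q ≤ Set.ncard ·) (orbit_smul a x)).mpr hx }
  have hS (i) (x : X) : c i x ∈ S ↔ x ∈ S := by
    change q ≤ _ ↔ q ≤ _
    rw [orbit_equivariantPerm_apply ⟨c i, hA i⟩, Set.ncard_image_of_injective _ (c i).injective]
  have := hn.eq_of_le_ncard_orbit (Y := S) h4 (hc.subtypePerm hS) (A := A) (q := q)
    (fun i => mem_equivariantPerm.mpr fun a x =>
      Subtype.ext (mem_equivariantPerm.mp (hA i) a x.1))
    (fun x => by
      rw [← Set.ncard_image_of_injective _ Subtype.val_injective, SubMulAction.val_image_orbit]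
      exact x.2) hX i j
  exact congrArg Subtype.val (Perm.congr_fun this ⟨x, hx⟩)

theorem apply_eq_of_apply_apply_ne (hn : PathRigid.{u} n) (h4 : 4 ≤ n)
    (hc : ArtinRelations (pathGraph n) c) {w : Perm X} (hwc : ∀ i, Commute w (c i))
    (hX : Nat.card X < 3 * (n + 1)) {x : X} (hx : w (w x) ≠ x) (i j : Fin n) :
    c i x = c j x :=
  let g : Subgroup.zpowers w := ⟨w, Subgroup.mem_zpowers w⟩
  hn.apply_eq_of_le_ncard_orbit (A := Subgroup.zpowers w) h4 hc
    (fun i => mem_equivariantPerm_zpowers (hwc i)) ((Set.ncard_le_card _).trans_lt hX)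
    (three_le_ncard_orbit (a := g) hx) i j

theorem apply_eq_of_apply_eq (hn : PathRigid.{u} n)
    (hc : ArtinRelations (pathGraph n) c) {w : Perm X} (hwc : ∀ i, Commute w (c i))
    (hX : {x | w x = x}.ncard ≤ n) {x : X} (hx : w x = x) (i j : Fin n) : c i x = c j x := by
  have := hn _ _ (hc.subtypePerm fun i => apply_apply_eq_iff_of_commute (hwc i)) hX i j
  exact congrArg Subtype.val (Perm.congr_fun this ⟨x, hx⟩)

/-- The conjugate of `w` by `a` generates with `w` a Klein four-group whose three involutions have
the same fixed points. -/
theorem apply_eq_of_involution (hn : PathRigid.{u} n) (h4 : 4 ≤ n)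
    (hc : ArtinRelations (pathGraph n) c) (hX : Nat.card X < 4 * (n + 1)) {a w : Perm X}
    (haw : BraidRel a (a * w)) (hw : w * w = 1) (hfix : ∀ x, w (a x) = a x ↔ w x = x)
    (hac : ∀ i, Commute a (c i)) (hwc : ∀ i, Commute w (c i)) {x : X} (hx : w x ≠ x)
    (i j : Fin n) : c i x = c j x := by
  let u := a * w * a⁻¹
  have huw : u * w = a⁻¹ * w * a := haw.conj_mul_eq hw
  have hu : u * u = 1 := by
    calc u * u = a * (w * w) * a⁻¹ := by simp only [u]; group
      _ = 1 := by rw [hw]; group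
  have hcomm : Commute u w := by
    refine commute_of_mul_self_eq_one hu hw ?_
    calc u * w * (u * w) = a⁻¹ * (w * w) * a := by rw [huw]; group
      _ = 1 := by rw [hw]; group
  have hux : u x ≠ x := by
    rw [mul_apply, mul_apply, ne_eq, ← Perm.eq_inv_iff_eq, ← hfix]
    simpa using hx
  have huwx : (u * w) x ≠ x := by
    rw [huw, mul_apply, mul_apply, ne_eq, Perm.inv_eq_iff_eq, eq_comm, eq_comm, hfix]
    exact hx
  have hne : u x ≠ w x := fun e => huwx (by
    rw [hcomm.eq, mul_apply, e]
    exact Perm.congr_fun hw x)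
  let A := Subgroup.closure {u, w}
  have : IsMulCommutative A := Subgroup.isMulCommutative_closure (by
    rintro _ (rfl | rfl) _ (rfl | rfl)
    exacts [rfl, hcomm.eq, hcomm.eq.symm, rfl])
  have huc (i) : Commute u (c i) := ((hac i).mul_left (hwc i)).mul_left (hac i).inv_left
  have hA (i) : c i ∈ equivariantPerm A X := by
    rw [mem_equivariantPerm_subgroup, Subgroup.closure_le]
    rintro _ (rfl | rfl) <;> rw [SetLike.mem_coe, Subgroup.mem_centralizer_singleton_iff]
    exacts [(huc i).eq, (hwc i).eq]
  exact hn.apply_eq_of_le_ncard_orbit h4 hc hA ((Set.ncard_le_card _).trans_lt hX)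
    (four_le_ncard_orbit (a := ⟨u, Subgroup.subset_closure (by simp)⟩)
      (b := ⟨w, Subgroup.subset_closure (by simp)⟩) hux hx hne huwx) i j

/-- The set where `a` and `b` differ has the same cardinality as the one where `c i₀` and `c j₀`
differ. -/
theorem apply_eq_of_braidRel (hn : PathRigid.{u} n) (h4 : 4 ≤ n)
    (hc : ArtinRelations (pathGraph n) c) (hX : Nat.card X ≤ 2 * n + 6) {a b : Perm X}
    (hab : BraidRel a b) (hac : ∀ i, Commute a (c i)) (hbc : ∀ i, Commute b (c i)) {g : Perm X}
    {i₀ j₀ : Fin n} (hga : SemiconjBy g a (c i₀)) (hgb : SemiconjBy g b (c j₀)) {x : X}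
    (hx : a x ≠ b x) (i j : Fin n) : c i x = c j x := by
  obtain ⟨w, rfl⟩ : ∃ w, a * w = b := ⟨a⁻¹ * b, by group⟩
  have hwc (i) : Commute w (c i) := by
    simpa using (hac i).inv_left.mul_left (hbc i)
  have hwx (x : X) : a x = (a * w) x ↔ w x = x := by simp [eq_comm]
  rw [ne_eq, hwx] at hx
  have hcard := Set.ncard_add_ncard_compl {x | w x = x}
  rcases le_or_gt {x | w x = x}.ncard n with hF | hF
  swap
  · exact (hn.commutingPathRigid h4 (N := 2 * n + 1) (by omega)).apply_eq_of_apply_ne hc hwc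
      (by change {x | w x = x}ᶜ.ncard ≤ _; omega) hx i j
  have hfix : {x | w x = x} = {x | c i₀ x = c j₀ x} := by
    refine Set.eq_of_subset_of_ncard_le (fun x hx => hn.apply_eq_of_apply_eq hc hwc hF hx i₀ j₀) ?_
    rw [← Set.ncard_image_of_injective {x | w x = x} g.injective]
    refine Set.ncard_le_ncard fun x hx => ?_
    obtain ⟨y, rfl⟩ := g.surjective x
    refine ⟨y, (hwx y).mp (g.injective ?_), rfl⟩
    rw [apply_apply_of_semiconjBy hga, apply_apply_of_semiconjBy hgb]
    exact hx
  replace hfix (x : X) : w x = x ↔ c i₀ x = c j₀ x := Set.ext_iff.mp hfix x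
  refine hn.apply_eq_of_involution h4 hc (by omega) hab ?_ ?_ hac hwc hx i j
  · ext x
    by_contra hwx
    have := (hfix x).mpr (hn.apply_eq_of_apply_apply_ne h4 hc hwc (by omega) hwx i₀ j₀)
    exact hwx (by rw [mul_apply, this, this, one_apply])
  · intro x
    rw [hfix, hfix, ← apply_apply_of_semiconjBy (hac i₀), ← apply_apply_of_semiconjBy (hac j₀),
      a.injective.eq_iff]

end PathRigid

end Star

section DisjointDiff

variable {X : Type*} {a b c d e a' b' c' d' g : Perm X}

/-- The sets where `a` and `b` differ and where `c` and `d` differ are disjoint. -/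
def DisjointDiff (a b c d : Perm X) : Prop := ∀ x, a x = b x ∨ c x = d x

namespace DisjointDiff

theorem swap (h : DisjointDiff a b c d) : DisjointDiff c d a b := fun x => (h x).symm

theorem symm_right (h : DisjointDiff a b c d) : DisjointDiff a b d c := fun x =>
  (h x).imp_right .symm

theorem trans_right (h : DisjointDiff a b c d) (h' : DisjointDiff a b d e) :
    DisjointDiff a b c e := fun x =>
  (h x).elim .inl fun hcd => (h' x).imp_right hcd.trans

theorem conj (h : DisjointDiff a b c d) (ha : SemiconjBy g a a') (hb : SemiconjBy g b b')
    (hc : SemiconjBy g c c') (hd : SemiconjBy g d d') : DisjointDiff a' b' c' d' := by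
  intro x
  obtain ⟨y, rfl⟩ := g.surjective x
  simp only [← apply_apply_of_semiconjBy ha, ← apply_apply_of_semiconjBy hb,
    ← apply_apply_of_semiconjBy hc, ← apply_apply_of_semiconjBy hd, g.injective.eq_iff]
  exact h y

end DisjointDiff

namespace ArtinRelations

variable {V G : Type*} [Group G] {Γ : SimpleGraph V}

theorem semiconjBy_mul_mul {s : V → G} (hs : ArtinRelations Γ s) {k l m : V} (hkl : Γ.Adj k l)
    (hlm : Γ.Adj l m) (hkm : ¬ Γ.Adj k m) :
    SemiconjBy (s k * s l * s m) (s k) (s l) ∧ SemiconjBy (s k * s l * s m) (s l) (s m) := by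
  refine ⟨(hs.braid hkl).semiconjBy.mul_left (hs.commute hkm).symm, ?_⟩
  rw [mul_assoc]
  exact SemiconjBy.mul_left (hs.commute hkm) (hs.braid hlm).semiconjBy

/-- Conjugation by `klmn` takes `klm` to `lmn`. -/
theorem semiconjBy_mul_of_chain {s : V → G} (hs : ArtinRelations Γ s) {k l m n : V}
    (hkl : Γ.Adj k l) (hlm : Γ.Adj l m) (hmn : Γ.Adj m n) (hkm : ¬ Γ.Adj k m) (hkn : ¬ Γ.Adj k n)
    (hln : ¬ Γ.Adj l n) : SemiconjBy (s l * s m * s n * (s k * s l * s m)) (s n) (s k) := by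
  obtain ⟨hk, hl⟩ := hs.semiconjBy_mul_mul hkl hlm hkm
  have hm : SemiconjBy (s k * s l * s m * s n) (s m) (s n) := by
    rw [mul_assoc (s k * s l), mul_assoc (s k), ← mul_assoc (s l)]
    exact SemiconjBy.mul_left (hs.commute hkn) (hs.semiconjBy_mul_mul hlm hmn hln).2
  have hklm : SemiconjBy (s k * s l * s m * s n) (s k * s l * s m) (s l * s m * s n) :=
    ((hk.mul_left (hs.commute hkn).symm).mul_right (hl.mul_left (hs.commute hln).symm)).mul_right hm
  calc s l * s m * s n * (s k * s l * s m) * s n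
      = s l * s m * s n * (s k * s l * s m * s n) := by group
    _ = s k * s l * s m * s n * (s k * s l * s m) := hklm.eq.symm
    _ = s k * (s l * s m * s n * (s k * s l * s m)) := by group

theorem slide {s : V → Perm X} (hs : ArtinRelations Γ s) {i j k l m : V}
    (h : DisjointDiff (s i) (s j) (s k) (s l)) (hkl : Γ.Adj k l) (hlm : Γ.Adj l m)
    (hkm : ¬ Γ.Adj k m) (hi : ¬ Γ.Adj i k ∧ ¬ Γ.Adj i l ∧ ¬ Γ.Adj i m)
    (hj : ¬ Γ.Adj j k ∧ ¬ Γ.Adj j l ∧ ¬ Γ.Adj j m) : DisjointDiff (s i) (s j) (s l) (s m) := by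
  have commute_chain {v : V} (hv : ¬ Γ.Adj v k ∧ ¬ Γ.Adj v l ∧ ¬ Γ.Adj v m) :
      Commute (s k * s l * s m) (s v) :=
    (((hs.commute hv.1).mul_right (hs.commute hv.2.1)).mul_right (hs.commute hv.2.2)).symm
  have hshift := hs.semiconjBy_mul_mul hkl hlm hkm
  exact h.conj (commute_chain hi) (commute_chain hj) hshift.1 hshift.2

end ArtinRelations

theorem BraidRel.card_support_le [Fintype X] [DecidableEq X] {v t : Perm X} (h : BraidRel v t) :
    t.support.card ≤ 2 * (t.support ∩ v.support).card := by
  have : (t.support \ v.support).card ≤ (t.support ∩ v.support).card := by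
    refine Finset.card_le_card_of_injOn t (fun x hx => ?_) t.injective.injOn
    simp only [Finset.coe_sdiff, Set.mem_sdiff, SetLike.mem_coe, mem_support, not_not] at hx
    refine Finset.mem_inter.mpr ⟨apply_mem_support.mpr (mem_support.mpr hx.1), ?_⟩
    refine mem_support.mpr fun hv => hx.1 (t.injective ?_)
    simpa [hx.2, hv] using (Perm.congr_fun h x).symm
  have := Finset.card_sdiff_add_card_inter t.support v.support
  omega

theorem eq_one_of_braidRel_of_disjoint [Finite X] {ι : Type*} [Fintype ι]
    (hι : 3 ≤ Fintype.card ι) {v : ι → Perm X} {t : Perm X} (hvt : ∀ i, BraidRel (v i) t)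
    (hv : Pairwise fun i j => Perm.Disjoint (v i) (v j)) : t = 1 := by
  classical
  have := Fintype.ofFinite X
  have : 3 * t.support.card ≤ 2 * t.support.card :=
    calc 3 * t.support.card ≤ Fintype.card ι * t.support.card := by gcongr
      _ = ∑ _i : ι, t.support.card := by simp
      _ ≤ ∑ i, 2 * (t.support ∩ (v i).support).card :=
        Finset.sum_le_sum fun i _ => (hvt i).card_support_le
      _ = 2 * (Finset.univ.biUnion fun i => t.support ∩ (v i).support).card := by
        rw [← Finset.mul_sum, Finset.card_biUnion fun i _ j _ hij =>
          (hv hij).disjoint_support.mono Finset.inter_subset_right Finset.inter_subset_right]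
      _ ≤ 2 * t.support.card := by
        gcongr
        exact Finset.biUnion_subset.mpr fun i _ => Finset.inter_subset_left
  rw [← support_eq_empty_iff, ← Finset.card_eq_zero]
  omega

theorem eq_of_braidRel_of_pairwise [Finite X] {ι : Type*} [Fintype ι] (hι : 3 ≤ Fintype.card ι)
    {v : ι → Perm X} {t z : Perm X} (hzt : Commute z t) (hzv : ∀ i, Commute z (v i))
    (hvt : ∀ i, BraidRel (v i) t) (hv : Pairwise fun i j => ∀ x, v i x = z x ∨ v j x = z x)
    (i : ι) : v i = t := by
  have hz : z⁻¹ * t = 1 := by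
    refine eq_one_of_braidRel_of_disjoint hι (v := fun i => z⁻¹ * v i)
      (fun i => (hvt i).mul_left_of_commute (hzv i).inv_left hzt.inv_left) fun i j hij x => ?_
    simpa only [mul_apply, Perm.inv_eq_iff_eq] using hv hij x
  obtain rfl := inv_mul_eq_one.mp hz
  exact (hvt i).eq_of_commute (hzv i).symm

theorem apply_eq_of_braidRel_of_pairwise [Finite X] {ι : Type*} [Fintype ι]
    (hι : 3 ≤ Fintype.card ι) {v : ι → Perm X} {t z w : Perm X} (hzw : Commute z w)
    (hzt : Commute z t) (hwt : Commute w t) (hzv : ∀ i, Commute z (v i))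
    (hwv : ∀ i, Commute w (v i)) (hvt : ∀ i, BraidRel (v i) t)
    (hv : Pairwise fun i j => ∀ x, z x = w x → v i x = z x ∨ v j x = z x) {x : X} (hx : z x = w x)
    (i : ι) : v i x = t x := by
  have invariant {u : Perm X} (hzu : Commute z u) (hwu : Commute w u) (x : X) :
      z (u x) = w (u x) ↔ z x = w x := by
    rw [apply_apply_of_semiconjBy hzu, apply_apply_of_semiconjBy hwu, u.injective.eq_iff]
  have := eq_of_braidRel_of_pairwise hι
    (v := fun i => (v i).subtypePerm (p := fun x => z x = w x) (invariant (hzv i) (hwv i)))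
    (t := t.subtypePerm (invariant hzt hwt))
    (z := z.subtypePerm (invariant (.refl z) hzw.symm))
    (commute_subtypePerm hzt _ _) (fun i => commute_subtypePerm (hzv i) _ _)
    (fun i => (hvt i).subtypePerm _ _)
    (fun i j hij x => (hv hij x x.2).imp Subtype.ext Subtype.ext) i
  exact congrArg Subtype.val (Perm.congr_fun this ⟨x, hx⟩)

end DisjointDiff

section Humphries

open SimpleGraph

/-- The Coxeter graph of the Humphries generators: `1, …, n - 1` form a path and `0` is attached
to `4`. -/
def humphriesGraph (n : ℕ) : SimpleGraph (Fin n) where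
  Adj i j := (1 ≤ (i : ℕ) ∧ (i : ℕ) + 1 = j) ∨ (1 ≤ (j : ℕ) ∧ (j : ℕ) + 1 = i) ∨
    ((i : ℕ) = 0 ∧ (j : ℕ) = 4) ∨ ((i : ℕ) = 4 ∧ (j : ℕ) = 0)
  symm := ⟨fun i j h => by omega⟩
  loopless := ⟨fun i h => by omega⟩

theorem humphriesGraph_adj {n : ℕ} {i j : Fin n} : (humphriesGraph n).Adj i j ↔
    (1 ≤ (i : ℕ) ∧ (i : ℕ) + 1 = j) ∨ (1 ≤ (j : ℕ) ∧ (j : ℕ) + 1 = i) ∨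
      ((i : ℕ) = 0 ∧ (j : ℕ) = 4) ∨ ((i : ℕ) = 4 ∧ (j : ℕ) = 0) := Iff.rfl

instance (n : ℕ) : DecidableRel (humphriesGraph n).Adj := fun _ _ =>
  decidable_of_iff _ humphriesGraph_adj.symm

/-- The index of the `i`-th generator of the chain `0, 4, 5, …, 2k + 7` of Humphries generators. -/
def longArm {k : ℕ} (i : Fin (2 * k + 5)) : Fin (2 * k + 8) :=
  if (i : ℕ) = 0 then ⟨0, by omega⟩ else ⟨i + 3, by omega⟩

theorem val_longArm {k : ℕ} (i : Fin (2 * k + 5)) :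
    (longArm i : ℕ) = if (i : ℕ) = 0 then 0 else (i : ℕ) + 3 := by
  rw [longArm, apply_ite Fin.val]

namespace ArtinRelations

section Eight

variable {X : Type*} {s : Fin 8 → Perm X}

theorem disjointDiff_one_three (hs : ArtinRelations (humphriesGraph 8) s) {i : Fin 8}
    (hi : i = 0 ∨ i = 5) (h : DisjointDiff (s i) (s 7) (s 1) (s 2)) :
    DisjointDiff (s i) (s 7) (s 1) (s 3) :=
  h.trans_right (hs.slide h (by decide) (by decide) (by decide)
    (by rcases hi with rfl | rfl <;> decide) (by decide))

theorem disjointDiff_five_seven (hs : ArtinRelations (humphriesGraph 8) s)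
    (h : DisjointDiff (s 6) (s 7) (s 1) (s 2)) : DisjointDiff (s 0) (s 1) (s 5) (s 7) := by
  have h23 := hs.slide (m := 3) h (by decide) (by decide) (by decide) (by decide) (by decide)
  have h34 := hs.slide (m := 4) h23 (by decide) (by decide) (by decide) (by decide) (by decide)
  have h40 := hs.slide (m := 0) h34 (by decide) (by decide) (by decide) (by decide) (by decide)
  have h76 : DisjointDiff (s 0) (s 1) (s 7) (s 6) :=
    (((h.trans_right h23).trans_right h34).trans_right h40).symm_right.swap.symm_right
  have h65 := hs.slide (m := 5) h76 (by decide) (by decide) (by decide) (by decide) (by decide)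
  exact (h76.trans_right h65).symm_right

theorem disjointDiff_four_zero (hs : ArtinRelations (humphriesGraph 8) s)
    (h : DisjointDiff (s 4) (s 7) (s 1) (s 2)) : DisjointDiff (s 1) (s 7) (s 4) (s 0) := by
  have h123 := hs.semiconjBy_mul_mul (k := 1) (l := 2) (m := 3) (by decide) (by decide) (by decide)
  have h234 := hs.semiconjBy_mul_mul (k := 2) (l := 3) (m := 4) (by decide) (by decide) (by decide)
  have commute_seven {i : Fin 8} (hi : ¬ (humphriesGraph 8).Adj 7 i) : Commute (s 7) (s i) :=
    hs.commute hi
  have h7 : Commute (s 7) (s 2 * s 3 * s 4 * (s 1 * s 2 * s 3)) := by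
    refine .mul_right (.mul_right (.mul_right ?_ ?_) ?_) (.mul_right (.mul_right ?_ ?_) ?_) <;>
      exact commute_seven (by decide)
  have h34 : DisjointDiff (s 1) (s 7) (s 3) (s 4) :=
    h.conj (hs.semiconjBy_mul_of_chain (by decide) (by decide) (by decide) (by decide) (by decide)
      (by decide)) h7.symm (h234.1.mul_left h123.1) (h234.2.mul_left h123.2)
  exact hs.slide h34 (by decide) (by decide) (by decide) (by decide) (by decide)

theorem zero_eq_four [Finite X] (hs : ArtinRelations (humphriesGraph 8) s)
    (h : ∀ i : Fin 8, i = 0 ∨ 4 ≤ i → DisjointDiff (s i) (s 7) (s 1) (s 2)) : s 0 = s 4 := by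
  have h₀ := hs.disjointDiff_one_three (.inl rfl) (h 0 (by decide))
  have h₅ := hs.disjointDiff_one_three (.inr rfl) (h 5 (by decide))
  have h₁ := hs.disjointDiff_five_seven (h 6 (by decide))
  ext x
  by_cases hx : s 1 x = s 7 x
  swap
  · exact ((hs.disjointDiff_four_zero (h 4 (by decide)) x).resolve_left hx).symm
  let f : Fin 3 → Fin 8 := ![0, 3, 5]
  refine apply_eq_of_braidRel_of_pairwise (v := fun i => s (f i)) (by simp) (hs.commute (by decide))
    (hs.commute (by decide)) (hs.commute (by decide)) (fun i => hs.commute (by decide +revert))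
    (fun i => hs.commute (by decide +revert)) (fun i => hs.braid (by decide +revert)) ?_ hx 0
  intro i j hij x hx
  have h03 : s 0 x = s 1 x ∨ s 3 x = s 1 x := (h₀ x).imp (·.trans hx.symm) .symm
  have h53 : s 5 x = s 1 x ∨ s 3 x = s 1 x := (h₅ x).imp (·.trans hx.symm) .symm
  have h05 : s 0 x = s 1 x ∨ s 5 x = s 1 x := (h₁ x).imp_right (·.trans hx.symm)
  fin_cases i <;> fin_cases j <;>
    first | exact absurd rfl hij | assumption | exact Or.symm (by assumption)

end Eight

section Chains

variable {G : Type*} [Group G] {k : ℕ} {s : Fin (2 * k + 8) → G}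

theorem comp_longArm (hs : ArtinRelations (humphriesGraph (2 * k + 8)) s) :
    ArtinRelations (pathGraph (2 * k + 5)) fun i => s (longArm i) :=
  hs.comap longArm fun i j => by
    grind [humphriesGraph_adj, pathGraph_adj, val_longArm]

theorem comp_succ {n : ℕ} {s : Fin (n + 1) → G} (hs : ArtinRelations (humphriesGraph (n + 1)) s) :
    ArtinRelations (pathGraph n) fun i => s i.succ :=
  hs.comap Fin.succ fun i j => by
    simp only [humphriesGraph_adj, pathGraph_adj, Fin.val_succ]
    omega

theorem comp_castLE {m n : ℕ} (hmn : m ≤ n) {s : Fin n → G}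
    (hs : ArtinRelations (humphriesGraph n) s) :
    ArtinRelations (humphriesGraph m) fun i => s (i.castLE hmn) :=
  hs.comap (Fin.castLE hmn) fun _ _ => Iff.rfl

end Chains

variable {X : Type u} [Finite X] {k : ℕ} {s : Fin (2 * k + 8) → Perm X}

theorem disjointDiff_longArm (hs : ArtinRelations (humphriesGraph (2 * k + 8)) s)
    (hX : Nat.card X ≤ 4 * k + 16) (i j : Fin (2 * k + 5)) :
    DisjointDiff (s (longArm i)) (s (longArm j)) (s ⟨1, by omega⟩) (s ⟨2, by omega⟩) := by
  let e : Fin 8 → Fin (2 * k + 8) := Fin.castLE (by omega)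
  have hs8 : ArtinRelations (humphriesGraph 8) fun i => s (e i) := hs.comp_castLE (by omega)
  have hc (v : Fin 8) (hv : v = 1 ∨ v = 2) (i : Fin (2 * k + 5)) :
      Commute (s (e v)) (s (longArm i)) := by
    refine hs.commute ?_
    rcases hv with rfl | rfl <;> grind [humphriesGraph_adj, val_longArm, Fin.val_castLE]
  have h123 := hs8.semiconjBy_mul_mul (k := 1) (l := 2) (m := 3) (by decide) (by decide) (by decide)
  have h234 := hs8.semiconjBy_mul_mul (k := 2) (l := 3) (m := 4) (by decide) (by decide) (by decide)
  have h345 := hs8.semiconjBy_mul_mul (k := 3) (l := 4) (m := 5) (by decide) (by decide) (by decide)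
  refine fun x => or_iff_not_imp_right.mpr fun hx => ?_
  exact (pathRigid_odd k).apply_eq_of_braidRel (by omega) hs.comp_longArm (by omega)
    (hs8.braid (i := 1) (j := 2) (by decide)) (hc 1 (.inl rfl)) (hc 2 (.inr rfl))
    (i₀ := ⟨1, by omega⟩) (j₀ := ⟨2, by omega⟩)
    (h345.1.mul_left (h234.1.mul_left h123.1)) (h345.2.mul_left (h234.2.mul_left h123.2)) hx i j

theorem eq_of_humphriesGraph (hs : ArtinRelations (humphriesGraph (2 * k + 8)) s)
    (hX : Nat.card X ≤ 4 * k + 16) (i j : Fin (2 * k + 8)) : s i = s j := by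
  let e : Fin 8 → Fin (2 * k + 8) := Fin.castLE (by omega)
  have hs8 : ArtinRelations (humphriesGraph 8) fun i => s (e i) := hs.comp_castLE (by omega)
  have arm := hs.disjointDiff_longArm hX
  have h04 : s (e 0) = s (e 4) := hs8.zero_eq_four fun v hv => by
    obtain ⟨i, hi⟩ : ∃ i : Fin (2 * k + 5), longArm i = e v :=
      ⟨⟨v - 3, by omega⟩, Fin.ext (by grind [val_longArm, Fin.val_castLE])⟩
    exact hi ▸ arm i ⟨4, by omega⟩
  have h34 : s (e 3) = s (e 4) := (hs8.braid (i := 3) (j := 4) (by decide)).eq_of_commute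
    (h04 ▸ hs8.commute (i := 3) (j := 0) (by decide))
  have succ_eq : ∀ i j : Fin (2 * k + 7), s i.succ = s j.succ :=
    hs.comp_succ.eq_of_pathGraph (i := ⟨2, by omega⟩) (j := ⟨3, by omega⟩) rfl h34
  have all_eq (i : Fin (2 * k + 8)) : s i = s (e 4) := by
    cases i using Fin.cases with
    | zero => exact h04
    | succ i => exact succ_eq i ⟨3, by omega⟩
  rw [all_eq i, all_eq j]

end ArtinRelations

theorem artinRelations_humphriesGraph {G : Type*} [Group G] {n : ℕ} {t : ℕ → G}
    (hcomm : ∀ i j : ℕ, 1 ≤ i → i ≤ n + 1 → 1 ≤ j → j ≤ n + 1 → (i + 2 ≤ j ∨ j + 2 ≤ i) →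
      Commute (t i) (t j))
    (hbraid : ∀ i : ℕ, 1 ≤ i → i ≤ n → BraidRel (t i) (t (i + 1)))
    (hcomm0 : ∀ i : ℕ, 1 ≤ i → i ≤ n + 1 → i ≠ 4 → Commute (t 0) (t i))
    (hbraid0 : BraidRel (t 0) (t 4)) :
    ArtinRelations (humphriesGraph (n + 2)) fun i => t i where
  braid {i j} h := by
    rcases h with ⟨hi, hij⟩ | ⟨hj, hji⟩ | ⟨hi, hj⟩ | ⟨hi, hj⟩
    · exact hij ▸ hbraid i hi (by omega)
    · exact hji ▸ (hbraid j hj (by omega)).symm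
    · rwa [hi, hj]
    · rw [hi, hj]
      exact hbraid0.symm
  commute {i j} h := by
    rw [humphriesGraph_adj] at h
    by_cases hij : i = j
    · exact hij ▸ Commute.refl _
    rcases Nat.eq_zero_or_pos i with hi | hi
    · exact hi ▸ hcomm0 j (by omega) (by omega) (by omega)
    rcases Nat.eq_zero_or_pos j with hj | hj
    · exact hj ▸ (hcomm0 i hi (by omega) (by omega)).symm
    exact hcomm i j hi (by omega) hj (by omega) (by omega)

end Humphries

theorem commutator_le_ker_of_closure_eq_top {G H : Type*} [Group G] [Group H] {S : Set G}
    (hS : Subgroup.closure S = ⊤) (f : G →* H) (h : ∀ x ∈ S, ∀ y ∈ S, Commute (f x) (f y)) :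
    commutator G ≤ f.ker := by
  have hrange : IsMulCommutative (Subgroup.closure (f '' S)) :=
    Subgroup.isMulCommutative_closure (by
      rintro _ ⟨x, hx, rfl⟩ _ ⟨y, hy, rfl⟩
      exact (h x hx y hy).eq)
  rw [← MonoidHom.map_closure, hS] at hrange
  rw [commutator_def, Subgroup.commutator_le]
  intro x _ y _
  rw [MonoidHom.mem_ker, map_commutatorElement, commutatorElement_eq_one_iff_mul_comm]
  exact setLike_mul_comm (Subgroup.mem_map_of_mem f (Subgroup.mem_top x))
    (Subgroup.mem_map_of_mem f (Subgroup.mem_top y))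

theorem mcg_hom_to_sym_trivial_general {ρ : ℕ} (hρ : 3 ≤ ρ) {G : Type*} [Group G]
    {t : Fin (2 * ρ + 2) → G} (ht : ArtinRelations (humphriesGraph (2 * ρ + 2)) t)
    (hgen : Subgroup.closure (Set.range t) = ⊤) {X : Type*} [Finite X]
    (hX : Nat.card X ≤ 4 * ρ + 4) (φ : G →* Perm X) : commutator G ≤ φ.ker := by
  obtain ⟨k, rfl⟩ := Nat.exists_eq_add_of_le' hρ
  refine commutator_le_ker_of_closure_eq_top hgen φ ?_
  rintro _ ⟨i, rfl⟩ _ ⟨j, rfl⟩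
  rw [(ht.map φ).eq_of_humphriesGraph (k := k) (by omega) i j]
  exact Commute.refl _

/-- Let `ρ ≥ 3` be an integer. Let `G` be a group containing elements
`t 0, t 1, …, t (2ρ+1)` satisfying the braid/commutation relations of the Humphries–Dehn
twist generators of the mapping class group, generated by `t 0, …, t (2ρ)`, and perfect.
Then every group homomorphism `φ : G → Sym_{4ρ+4}` is trivial. -/
theorem mcg_hom_to_sym_trivial (ρ : ℕ) (hρ : 3 ≤ ρ) (G : Type*) [Group G] (t : ℕ → G)
    (hcomm : ∀ i j : ℕ, 1 ≤ i → i ≤ 2 * ρ + 1 → 1 ≤ j → j ≤ 2 * ρ + 1 →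
      (i + 2 ≤ j ∨ j + 2 ≤ i) → t i * t j = t j * t i)
    (hbraid : ∀ i : ℕ, 1 ≤ i → i ≤ 2 * ρ →
      t i * t (i + 1) * t i = t (i + 1) * t i * t (i + 1))
    (hcomm0 : ∀ i : ℕ, 1 ≤ i → i ≤ 2 * ρ + 1 → i ≠ 4 → t 0 * t i = t i * t 0)
    (hbraid0 : t 0 * t 4 * t 0 = t 4 * t 0 * t 4)
    (hgen : Subgroup.closure (t '' {i : ℕ | i ≤ 2 * ρ}) = ⊤)
    (hperfect : commutator G = ⊤) :
    ∀ φ : G →* Equiv.Perm (Fin (4 * ρ + 4)), ∀ g : G, φ g = 1 := by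
  have hgen' : Subgroup.closure (Set.range fun i : Fin (2 * ρ + 2) => t i) = ⊤ :=
    top_unique (hgen.ge.trans (Subgroup.closure_mono fun _ ⟨i, hi, h⟩ => ⟨⟨i, by grind⟩, h⟩))
  exact fun φ g => mcg_hom_to_sym_trivial_general hρ
    (artinRelations_humphriesGraph hcomm hbraid hcomm0 hbraid0) hgen' (by simp) φ
    (hperfect.ge (Subgroup.mem_top g))
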